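/- arXiv:2504.05462 — 2 statements merged into one kernel-verified Lean document; each statement's English description precedes it below -/
import Mathlib

section
/- Every symmetric Markov process is reflection positive: if x_t is a stochastic process such that (a) the processes (x_t) and (x_{−t}) have identical finite-dimensional distributions, and (b) x_t satisfies the Markov property, then for any finite collection of positive times 0 < t₁ < ... < t_n and any bounded measurable complex-valued function F of n variables, E[ F(x(t₁),...,x(t_n)) · conj(F(x(−t₁),...,x(−t_n))) ] ≥ 0 (in particular this expectation is real). -/
open MeasureTheory Filter
open scoped ComplexOrder

open ProbabilityTheory in
/-- One-step disintegration: joint law of past and next value. -/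
lemma rp_law {Ω β : Type*} [MeasurableSpace Ω] [mβ : MeasurableSpace β] (μ : Measure Ω)
    [IsProbabilityMeasure μ] (V : Ω → β) (hV : Measurable V) (L : β → ℝ) (hL : Measurable L)
    (Y : Ω → ℝ) (hY : Measurable Y)
    (h : ∀ g : ℝ → ℝ, Measurable g → (∃ C, ∀ y, |g y| ≤ C) →
      μ[(fun ω => g (Y ω)) | mβ.comap V] =ᵐ[μ]
        μ[(fun ω => g (Y ω)) | (borel ℝ).comap (fun ω => L (V ω))]) :
    μ.map (fun ω => (V ω, Y ω)) =
      μ.map V ⊗ₘ (condDistrib Y (fun ω => L (V ω)) μ).comap L hL := by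
  have hLV : Measurable (fun ω => L (V ω)) := hL.comp hV
  have : IsProbabilityMeasure (μ.map V) := Measure.isProbabilityMeasure_map hV.aemeasurable
  have : IsProbabilityMeasure (μ.map (fun ω => (V ω, Y ω))) :=
    Measure.isProbabilityMeasure_map (hV.prodMk hY).aemeasurable
  refine Measure.ext_prod fun {s t} hs ht => ?_
  rw [Measure.compProd_apply_prod hs ht, Measure.map_apply (hV.prodMk hY) (hs.prod ht),
    setLIntegral_map hs (Kernel.measurable_coe _ ht) hV]
  simp only [Kernel.comap_apply]
  have h1 := condDistrib_ae_eq_condExp (μ := μ) hLV hY ht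
  have h2 := h (t.indicator fun _ => 1) (measurable_const.indicator ht) ⟨1, fun y => by
    by_cases hy : y ∈ t <;> simp [hy]⟩
  have e : (fun ω => (t.indicator (fun _ => (1:ℝ))) (Y ω)) = (Y ⁻¹' t).indicator (fun _ => 1) := by
    ext ω; rfl
  rw [e] at h2
  have h3 := h2.trans h1.symm
  have hm : MeasurableSet (V ⁻¹' s) := hV hs
  have hint : Integrable ((Y ⁻¹' t).indicator (fun _ => (1:ℝ))) μ :=
    (integrable_const _).indicator (hY ht)
  have h4 := setIntegral_condExp hV.comap_le hint (s := V ⁻¹' s) ⟨s, hs, rfl⟩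
  rw [setIntegral_congr_ae hm (h3.mono fun ω hω _ => hω),
    setIntegral_indicator (hY ht)] at h4
  have h5 : ∫⁻ a in V ⁻¹' s, (condDistrib Y (fun ω => L (V ω)) μ) (L (V a)) t ∂μ =
      ENNReal.ofReal
        (∫ a in V ⁻¹' s, ((condDistrib Y (fun ω => L (V ω)) μ) (L (V a))).real t ∂μ) := by
    rw [ofReal_integral_eq_lintegral_ofReal]
    · simp
    · exact ((integrable_condExp).congr h3).integrableOn
    · exact Eventually.of_forall fun _ => measureReal_nonneg
  rw [h5, h4]
  simp [Set.mk_preimage_prod]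

open ProbabilityTheory in
lemma rp_step {Ω β : Type*} [MeasurableSpace Ω] [mβ : MeasurableSpace β] (μ : Measure Ω)
    [IsProbabilityMeasure μ] (V : Ω → β) (hV : Measurable V) (L : β → ℝ) (hL : Measurable L)
    (Y : Ω → ℝ) (hY : Measurable Y)
    (h : ∀ g : ℝ → ℝ, Measurable g → (∃ C, ∀ y, |g y| ≤ C) →
      μ[(fun ω => g (Y ω)) | mβ.comap V] =ᵐ[μ]
        μ[(fun ω => g (Y ω)) | (borel ℝ).comap (fun ω => L (V ω))])
    (Φ : β × ℝ → ℂ) (hΦ : Measurable Φ) (C : ℝ) (hC : ∀ y, ‖Φ y‖ ≤ C) :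
    ∫ ω, Φ (V ω, Y ω) ∂μ =
      ∫ ω, ∫ z, Φ (V ω, z) ∂(condDistrib Y (fun ω => L (V ω)) μ (L (V ω))) ∂μ := by
  have : IsProbabilityMeasure (μ.map V) := Measure.isProbabilityMeasure_map hV.aemeasurable
  rw [← integral_map (φ := fun ω => (V ω, Y ω)) (hV.prodMk hY).aemeasurable
    hΦ.aestronglyMeasurable, rp_law μ V hV L hL Y hY h, Measure.integral_compProd, integral_map]
  · rfl
  · exact hV.aemeasurable
  · exact (hΦ.stronglyMeasurable.integral_kernel_prod_right').aestronglyMeasurable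
  · exact Integrable.of_bound hΦ.aestronglyMeasurable C (Eventually.of_forall hC)

lemma rp_snoc_meas (k : ℕ) :
    Measurable (fun p : (Fin (k + 1) → ℝ) × ℝ => (Fin.snoc p.1 p.2 : Fin (k + 2) → ℝ)) := by
  refine measurable_pi_lambda _ fun i => ?_
  refine Fin.lastCases ?_ (fun j => ?_) i
  · simpa using measurable_snd
  · simp only [Fin.snoc_castSucc]
    exact (measurable_pi_apply j).comp measurable_fst

open ProbabilityTheory in
lemma rp_chain {Ω : Type*} [MeasurableSpace Ω] (μ : Measure Ω) [IsProbabilityMeasure μ]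
    (x : ℝ → Ω → ℝ) (hmeas : ∀ t, Measurable (x t))
    (hMarkov : ∀ (n : ℕ) (t : Fin (n + 2) → ℝ), StrictMono t →
      ∀ g : ℝ → ℝ, Measurable g → (∃ C, ∀ y, |g y| ≤ C) →
      μ[(fun ω => g (x (t (Fin.last (n + 1))) ω)) |
          MeasurableSpace.comap (fun ω => fun i : Fin (n + 1) => x (t i.castSucc) ω)
            MeasurableSpace.pi]
        =ᵐ[μ]
      μ[(fun ω => g (x (t (Fin.last (n + 1))) ω)) |
          MeasurableSpace.comap (x (t (Fin.last n).castSucc)) (borel ℝ)])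
    (τ : ℕ → ℝ) (hτ : StrictMono τ) (n : ℕ) (k : ℕ) :
    ∀ F : (Fin (k + 1) → ℝ) → ℂ, Measurable F → (∃ C, ∀ y, ‖F y‖ ≤ C) →
    ∃ h : ℝ → ℂ, Measurable h ∧ (∃ C, ∀ y, ‖h y‖ ≤ C) ∧
      ∀ G : (Fin (n + 1) → ℝ) → ℂ, Measurable G → (∃ C, ∀ y, ‖G y‖ ≤ C) →
      ∫ ω, F (fun i => x (τ (n + i)) ω) * G (fun i => x (τ i) ω) ∂μ =
        ∫ ω, h (x (τ n) ω) * G (fun i => x (τ i) ω) ∂μ := by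
  induction k with
  | zero =>
    rintro F hF ⟨C, hC⟩
    refine ⟨fun y => F (fun _ => y), hF.comp (measurable_pi_lambda _ fun _ => measurable_id),
      ⟨C, fun y => hC _⟩, fun G hG hG' => ?_⟩
    have : ∀ ω, (fun i : Fin (0 + 1) => x (τ (n + i)) ω) = fun _ => x (τ n) ω := by
      intro ω; ext i
      have : (i : ℕ) = 0 := by omega
      simp [this]
    simp only [this]
  | succ k ih =>
    rintro F hF ⟨C, hC⟩
    let V : Ω → (Fin (n + k + 1) → ℝ) := fun ω i => x (τ i) ω
    have hV : Measurable V := measurable_pi_lambda _ fun i => hmeas _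
    let L : (Fin (n + k + 1) → ℝ) → ℝ := fun v => v (Fin.last (n + k))
    have hL : Measurable L := measurable_pi_apply _
    let Y : Ω → ℝ := x (τ (n + k + 1))
    have hY : Measurable Y := hmeas _
    have hM : ∀ g : ℝ → ℝ, Measurable g → (∃ C, ∀ y, |g y| ≤ C) →
        μ[(fun ω => g (Y ω)) | MeasurableSpace.pi.comap V] =ᵐ[μ]
          μ[(fun ω => g (Y ω)) | (borel ℝ).comap (fun ω => L (V ω))] :=
      hMarkov (n + k) (fun i => τ i) (fun i j hij => hτ hij)
    let η : Kernel ℝ ℝ := condDistrib Y (fun ω => L (V ω)) μ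
    have : IsMarkovKernel η := by dsimp only [η]; infer_instance
    let F' : (Fin (k + 1) → ℝ) → ℂ := fun y => ∫ z, F (Fin.snoc y z) ∂(η (y (Fin.last k)))
    have hF' : Measurable F' := by
      have := StronglyMeasurable.integral_kernel_prod_right'
        (κ := η.comap (fun y : Fin (k + 1) → ℝ => y (Fin.last k)) (measurable_pi_apply _))
        (hF.comp (rp_snoc_meas k)).stronglyMeasurable
      exact this.measurable
    have hC' : ∀ y, ‖F' y‖ ≤ C := fun y => by
      have := norm_integral_le_of_norm_le_const (μ := η (y (Fin.last k)))
        (f := fun z => F (Fin.snoc y z)) (C := C) (Eventually.of_forall fun z => hC _)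
      simpa using this
    obtain ⟨h, hh, hhb, hhe⟩ := ih F' hF' ⟨C, hC'⟩
    refine ⟨h, hh, hhb, fun G hG hGb => ?_⟩
    rw [← hhe G hG hGb]
    obtain ⟨D, hD⟩ := hGb
    let Φ : (Fin (n + k + 1) → ℝ) × ℝ → ℂ := fun p =>
      F (Fin.snoc (fun i : Fin (k + 1) => p.1 ⟨n + i, by omega⟩) p.2) *
        G (fun i : Fin (n + 1) => p.1 ⟨i, by omega⟩)
    have hΦ : Measurable Φ := by
      have m1 : Measurable (fun p : (Fin (n + k + 1) → ℝ) × ℝ =>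
          ((fun i : Fin (k + 1) => p.1 ⟨n + i, by omega⟩ : Fin (k + 1) → ℝ), p.2)) :=
        Measurable.prodMk (measurable_pi_lambda _ fun i =>
          (measurable_pi_apply _).comp measurable_fst) measurable_snd
      have m2 : Measurable (fun p : (Fin (n + k + 1) → ℝ) × ℝ =>
          (fun i : Fin (n + 1) => p.1 ⟨i, by omega⟩ : Fin (n + 1) → ℝ)) :=
        measurable_pi_lambda _ fun i => (measurable_pi_apply _).comp measurable_fst
      exact (hF.comp ((rp_snoc_meas k).comp m1)).mul (hG.comp m2)
    have key := rp_step μ V hV L hL Y hY hM Φ hΦ (C * D) fun p => by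
      rw [norm_mul]
      exact mul_le_mul (hC _) (hD _) (norm_nonneg _) ((norm_nonneg _).trans (hC 0))
    have e1 : ∀ ω, Φ (V ω, Y ω) =
        F (fun i => x (τ (n + i)) ω) * G (fun i => x (τ i) ω) := by
      intro ω
      have : (Fin.snoc (fun i : Fin (k + 1) => V ω ⟨n + i, by omega⟩) (Y ω) : Fin (k + 2) → ℝ)
          = fun i : Fin (k + 2) => x (τ (n + i)) ω := by
        ext i
        refine Fin.lastCases ?_ (fun j => ?_) i
        · simp [Y, add_assoc]
        · simp [V]
      simp only [Φ, this]
      rfl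
    have e2 : ∀ ω, ∫ z, Φ (V ω, z) ∂(condDistrib Y (fun ω => L (V ω)) μ (L (V ω))) =
        F' (fun i => x (τ (n + i)) ω) * G (fun i => x (τ i) ω) := by
      intro ω
      simp only [Φ]
      rw [integral_mul_const]
      rfl
    simp only [e1, e2] at key
    exact key

lemma rp_ext (n : ℕ) (t : Fin n → ℝ) (hpos : ∀ i, 0 < t i) (ht : StrictMono t) :
    ∃ T : ℕ → ℝ, StrictMono T ∧ T 0 = 0 ∧ ∀ i : Fin n, T (i + 1) = t i := by
  refine ⟨fun j => if j = 0 then 0 else if h : j - 1 < n then t ⟨j - 1, h⟩ else (∑ i, t i) + j,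
    strictMono_nat_of_lt_succ fun j => ?_, by simp, fun i => by simp⟩
  have hS : 0 ≤ ∑ i, t i := Finset.sum_nonneg fun i _ => (hpos i).le
  have hle : ∀ i, t i ≤ ∑ i, t i := fun i =>
    Finset.single_le_sum (fun i _ => (hpos i).le) (Finset.mem_univ i)
  have hj : (0 : ℝ) ≤ j := Nat.cast_nonneg j
  by_cases h0 : j = 0
  · subst h0
    by_cases hn : 0 < n
    · simpa [hn] using hpos _
    · simp [hn]; linarith
  · simp only [h0, if_false, Nat.succ_ne_zero, Nat.add_sub_cancel]
    by_cases h1 : j < n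
    · have h2 : j - 1 < n := by omega
      simp only [h1, h2, dif_pos]
      exact ht (by simp only [Fin.lt_def]; omega)
    · by_cases h2 : j - 1 < n
      · simp only [h1, h2, dif_pos, dif_neg, not_false_iff]
        have := hle ⟨j - 1, h2⟩
        push_cast; linarith
      · simp only [h1, h2, dif_neg, not_false_iff]
        push_cast; linarith

/-- Every symmetric Markov process is reflection positive: if the processes `x_t` and
`x_{-t}` have identical finite-dimensional distributions and `x` has the Markov property
(conditioning the value at the latest time on finitely many earlier values equals
conditioning on the most recent one), then for any positive times and any bounded
measurable complex `F`, `E[F(x(t₁),…,x(tₙ)) ⋅ conj (F(x(-t₁),…,x(-tₙ)))] ≥ 0`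
(in the order on `ℂ`, so in particular the expectation is real). -/
theorem symmetric_markov_is_reflection_positive
    {Ω : Type*} [MeasurableSpace Ω] (μ : Measure Ω) [IsProbabilityMeasure μ]
    (x : ℝ → Ω → ℝ) (hmeas : ∀ t, Measurable (x t))
    (hsym : ∀ (n : ℕ) (t : Fin n → ℝ),
      Measure.map (fun ω => fun i => x (t i) ω) μ
        = Measure.map (fun ω => fun i => x (-(t i)) ω) μ)
    (hMarkov : ∀ (n : ℕ) (t : Fin (n + 2) → ℝ), StrictMono t →
      ∀ g : ℝ → ℝ, Measurable g → (∃ C, ∀ y, |g y| ≤ C) →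
      μ[(fun ω => g (x (t (Fin.last (n + 1))) ω)) |
          MeasurableSpace.comap (fun ω => fun i : Fin (n + 1) => x (t i.castSucc) ω)
            MeasurableSpace.pi]
        =ᵐ[μ]
      μ[(fun ω => g (x (t (Fin.last (n + 1))) ω)) |
          MeasurableSpace.comap (x (t (Fin.last n).castSucc)) (borel ℝ)]) :
    ∀ (n : ℕ) (t : Fin n → ℝ), (∀ i, 0 < t i) → StrictMono t →
      ∀ F : (Fin n → ℝ) → ℂ, Measurable F → (∃ C, ∀ y, ‖F y‖ ≤ C) →
      0 ≤ ∫ ω, F (fun i => x (t i) ω) * (starRingEnd ℂ) (F (fun i => x (-(t i)) ω)) ∂μ := by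
  intro n t hpos ht F hF hFb
  obtain ⟨T, hT, hT0, hTt⟩ := rp_ext n t hpos ht
  let τ : ℕ → ℝ := fun i => if i < n then -T (n - i) else T (i - n)
  have hτ : StrictMono τ := by
    intro i j hij
    simp only [τ]
    by_cases hi : i < n
    · by_cases hj : j < n
      · simp only [hi, hj, if_true]
        exact neg_lt_neg (hT (by omega))
      · simp only [hi, hj, if_true, if_false]
        have h1 : T 0 < T (n - i) := hT (by omega)
        have h2 : T 0 ≤ T (j - n) := hT.monotone (by omega)
        linarith
    · have hj : ¬ j < n := by omega
      simp only [hi, hj, if_false]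
      exact hT (by omega)
  have hτn : τ n = 0 := by simp [τ, hT0]
  have hτp : ∀ i : Fin n, τ (n + (i.succ : Fin (n + 1))) = t i := fun i => by
    simp [τ, hTt]
  have hτm : ∀ i : Fin n, τ (n - 1 - i) = -t i := fun i => by
    have h1 : n - 1 - (i : ℕ) < n := by omega
    have h2 : n - (n - 1 - (i : ℕ)) = i + 1 := by omega
    simp only [τ, h1, if_true, h2, hTt]
  obtain ⟨C, hC⟩ := hFb
  have msucc : Measurable (fun v : Fin (n + 1) → ℝ => fun i : Fin n => v i.succ) :=
    measurable_pi_lambda _ fun i => measurable_pi_apply _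
  have mrev : Measurable (fun v : Fin (n + 1) → ℝ =>
      fun i : Fin n => v ⟨n - 1 - i, by omega⟩) :=
    measurable_pi_lambda _ fun i => measurable_pi_apply _
  have mconj : Measurable (starRingEnd ℂ) := Complex.continuous_conj.measurable
  obtain ⟨h, hh, ⟨D, hD⟩, hhe⟩ := rp_chain μ x hmeas hMarkov τ hτ n n
    (fun v => F (fun i => v i.succ)) (hF.comp msucc) ⟨C, fun y => hC _⟩
  have A := hhe (fun v => (starRingEnd ℂ) (F (fun i : Fin n => v ⟨n - 1 - i, by omega⟩)))
    (mconj.comp (hF.comp mrev)) ⟨C, fun y => by simpa using hC _⟩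
  have B := hhe (fun v => (starRingEnd ℂ) (h (v (Fin.last n))))
    (mconj.comp (hh.comp (measurable_pi_apply _))) ⟨D, fun y => by simpa using hD _⟩
  simp only [hτp, hτm, hτn, Fin.val_last] at A B
  have mH : Measurable (fun v : Fin (n + 1) → ℝ =>
      h (v 0) * (starRingEnd ℂ) (F (fun i => v i.succ))) :=
    (hh.comp (measurable_pi_apply _)).mul (mconj.comp (hF.comp msucc))
  have mX : ∀ s : Fin (n + 1) → ℝ, Measurable (fun ω => fun i => x (s i) ω) :=
    fun s => measurable_pi_lambda _ fun i => hmeas _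
  have hs := hsym (n + 1) (Fin.cons 0 t)
  have E : ∫ ω, h (x 0 ω) * (starRingEnd ℂ) (F (fun i => x (t i) ω)) ∂μ =
      ∫ ω, h (x 0 ω) * (starRingEnd ℂ) (F (fun i => x (-(t i)) ω)) ∂μ := by
    have e1 := integral_map (μ := μ) (mX (Fin.cons 0 t)).aemeasurable mH.aestronglyMeasurable
    have e2 := integral_map (μ := μ) (mX (fun i => -(Fin.cons 0 t : Fin (n + 1) → ℝ) i)).aemeasurable
      mH.aestronglyMeasurable
    rw [hs, e2] at e1
    simpa using e1.symm
  have D' : ∫ ω, h (x 0 ω) * (starRingEnd ℂ) (F (fun i => x (t i) ω)) ∂μ =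
      (starRingEnd ℂ) (∫ ω, F (fun i => x (t i) ω) * (starRingEnd ℂ) (h (x 0 ω)) ∂μ) := by
    rw [← integral_conj]
    refine integral_congr_ae (Eventually.of_forall fun ω => ?_)
    simp [mul_comm]
  rw [A, ← E, D', B]
  have R : ∀ ω, h (x 0 ω) * (starRingEnd ℂ) (h (x 0 ω)) = ((‖h (x 0 ω)‖ ^ 2 : ℝ) : ℂ) := by
    intro ω
    rw [Complex.mul_conj, Complex.normSq_eq_norm_sq]
  simp only [R]
  rw [integral_complex_ofReal, Complex.conj_ofReal]
  exact Complex.zero_le_real.mpr (integral_nonneg fun ω => by positivity)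
end

section
/- A stationary symmetric Markov process is reflection positive about every time point: if x_t is a Markov process whose finite-dimensional distributions are invariant under all time translations t ↦ t + τ and under time reflection t ↦ −t, then for every a ∈ ℝ, every finite set of times t₁,...,t_n > a, and every bounded measurable complex F, E[F(x(t₁),...,x(t_n)) · conj(F(x(2a−t₁),...,x(2a−t_n)))] ≥ 0. -/
open MeasureTheory ProbabilityTheory
open scoped ComplexOrder

/-- The Markov property used in the statement. -/
def MarkovProp {Ω : Type*} [MeasurableSpace Ω] (μ : Measure Ω) (x : ℝ → Ω → ℝ) : Prop :=
  ∀ (n : ℕ) (t : Fin (n + 2) → ℝ), StrictMono t →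
      ∀ g : ℝ → ℝ, Measurable g → (∃ C, ∀ y, |g y| ≤ C) →
      μ[(fun ω => g (x (t (Fin.last (n + 1))) ω)) |
          MeasurableSpace.comap (fun ω => fun i : Fin (n + 1) => x (t i.castSucc) ω)
            MeasurableSpace.pi]
        =ᵐ[μ]
      μ[(fun ω => g (x (t (Fin.last (n + 1))) ω)) |
          MeasurableSpace.comap (x (t (Fin.last n).castSucc)) (borel ℝ)]

lemma markov_finset {Ω : Type*} [MeasurableSpace Ω] {μ : Measure Ω} {x : ℝ → Ω → ℝ}
    (hM : MarkovProp μ x) (S : Finset ℝ) (b c : ℝ) (hb : b ∈ S) (hS : ∀ s ∈ S, s ≤ b)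
    (hbc : b < c) (g : ℝ → ℝ) (hg : Measurable g) (hC : ∃ C, ∀ y, |g y| ≤ C) :
    μ[(fun ω => g (x c ω)) |
        MeasurableSpace.comap (fun ω => fun i : S => x i ω) MeasurableSpace.pi]
      =ᵐ[μ] μ[(fun ω => g (x c ω)) | MeasurableSpace.comap (x b) (borel ℝ)] := by
  obtain ⟨n, hn⟩ : ∃ n, S.card = n + 1 :=
    Nat.exists_eq_succ_of_ne_zero (Finset.card_ne_zero_of_mem hb)
  let e := S.orderIsoOfFin hn
  let t : Fin (n + 2) → ℝ := Fin.snoc (α := fun _ => ℝ) (fun i => (e i : ℝ)) c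
  have ht1 : ∀ i : Fin (n + 1), t i.castSucc = e i := fun i => by simp [t]
  have ht2 : t (Fin.last (n + 1)) = c := by simp [t]
  have hmono : StrictMono t := by
    rw [Fin.strictMono_iff_lt_succ]
    intro i
    induction i using Fin.lastCases with
    | last =>
      rw [Fin.succ_last, ht2, ht1]
      exact lt_of_le_of_lt (hS _ (e _).2) hbc
    | cast i =>
      rw [Fin.succ_castSucc, ht1, ht1]
      exact e.strictMono (Fin.castSucc_lt_succ)
  have hlast : t (Fin.last n).castSucc = b := by
    rw [ht1]
    apply le_antisymm (hS _ (e _).2)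
    have : (⟨b, hb⟩ : S) ≤ e (Fin.last n) := by
      rw [← e.apply_symm_apply ⟨b, hb⟩]
      exact e.monotone (Fin.le_last _)
    exact this
  have hcomap : MeasurableSpace.comap (fun ω => fun i : S => x i ω) MeasurableSpace.pi
      = MeasurableSpace.comap (fun ω => fun i : Fin (n + 1) => x (t i.castSucc) ω)
            MeasurableSpace.pi := by
    simp only [MeasurableSpace.pi, MeasurableSpace.comap_iSup, MeasurableSpace.comap_comp]
    rw [← Equiv.iSup_comp e.toEquiv]
    simp only [ht1]
    rfl
  have := hM n t hmono g hg hC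
  rw [← hcomap, ht2, hlast] at this
  exact this

lemma markov_compProd {Ω : Type*} [MeasurableSpace Ω] {μ : Measure Ω} [IsProbabilityMeasure μ]
    {x : ℝ → Ω → ℝ} (hmeas : ∀ t, Measurable (x t))
    (hM : MarkovProp μ x) (S : Finset ℝ) (b c : ℝ) (hb : b ∈ S) (hS : ∀ s ∈ S, s ≤ b)
    (hbc : b < c) :
    μ.map (fun ω => ((fun i : S => x i ω), x c ω))
      = (μ.map (fun ω => fun i : S => x i ω)) ⊗ₘ
        ((condDistrib (x c) (x b) μ).comap (fun y : S → ℝ => y ⟨b, hb⟩)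
          (measurable_pi_apply _)) := by
  have hmS : Measurable (fun ω => fun i : S => x i ω) := measurable_pi_lambda _ fun i => hmeas i
  have : IsProbabilityMeasure (μ.map (fun ω => fun i : S => x i ω)) :=
    Measure.isProbabilityMeasure_map hmS.aemeasurable
  have : IsProbabilityMeasure (μ.map (fun ω => ((fun i : S => x i ω), x c ω))) :=
    Measure.isProbabilityMeasure_map (hmS.prodMk (hmeas c)).aemeasurable
  apply Measure.ext_prod
  intro A B hA hB
  rw [Measure.map_apply (hmS.prodMk (hmeas c)) (hA.prod hB), Measure.compProd_apply_prod hA hB,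
    setLIntegral_map hA (Kernel.measurable_coe _ hB) hmS]
  simp only [Kernel.comap_apply]
  have h1 := condDistrib_ae_eq_condExp (μ := μ) (hmeas b) (hmeas c) hB
  have h2 := markov_finset hM S b c hb hS hbc (B.indicator fun _ => 1)
    (measurable_const.indicator hB) ⟨1, fun y => by
      by_cases hy : y ∈ B <;> simp [hy]⟩
  have h3 : (fun ω => B.indicator (fun _ => (1 : ℝ)) (x c ω))
      = (x c ⁻¹' B).indicator fun _ => (1 : ℝ) := by
    ext ω; rfl
  rw [h3] at h2
  have hbor : (borel ℝ) = inferInstanceAs (MeasurableSpace ℝ) :=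
    (BorelSpace.measurable_eq (α := ℝ)).symm
  rw [hbor] at h2
  have h4 := h2.trans h1.symm
  have hA' := hmS hA
  have h5 := setIntegral_condExp (μ := μ) (hmS.comap_le)
    ((integrable_const (1 : ℝ)).indicator (hmeas c hB)) ⟨A, hA, rfl⟩
  rw [setIntegral_congr_ae (hmS hA) (h4.mono fun ω h _ => h)] at h5
  rw [setIntegral_indicator (hmeas c hB)] at h5
  simp only [integral_const, smul_eq_mul, mul_one, measureReal_restrict_apply_univ] at h5
  have h6 := ofReal_integral_eq_lintegral_ofReal (μ := μ.restrict ((fun ω (i : S) => x i ω) ⁻¹' A))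
    (f := fun ω => (condDistrib (x c) (x b) μ (x b ω)).real B)
    (integrable_toReal_condDistrib (hmeas b).aemeasurable hB).integrableOn
    (Filter.Eventually.of_forall fun _ => measureReal_nonneg)
  rw [h5, ofReal_measureReal] at h6
  exact h6.trans (lintegral_congr fun ω => ofReal_measureReal)

lemma bdd_integrable {α : Type*} [MeasurableSpace α] (μ : Measure α) [IsFiniteMeasure μ]
    {f : α → ℂ} (hf : Measurable f) (C : ℝ) (hC : ∀ y, ‖f y‖ ≤ C) : Integrable f μ :=
  Integrable.of_bound hf.aestronglyMeasurable C (Filter.Eventually.of_forall hC)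

lemma markov_integral {Ω : Type*} [MeasurableSpace Ω] {μ : Measure Ω} [IsProbabilityMeasure μ]
    {x : ℝ → Ω → ℝ} (hmeas : ∀ t, Measurable (x t))
    (hM : MarkovProp μ x) (S : Finset ℝ) (b c : ℝ) (hb : b ∈ S) (hS : ∀ s ∈ S, s ≤ b)
    (hbc : b < c) (Φ : (S → ℝ) × ℝ → ℂ) (hΦ : Measurable Φ) (C : ℝ) (hC : ∀ y, ‖Φ y‖ ≤ C) :
    ∫ ω, Φ ((fun i : S => x i ω), x c ω) ∂μ
      = ∫ ω, ∫ z, Φ ((fun i : S => x i ω), z) ∂(condDistrib (x c) (x b) μ (x b ω)) ∂μ := by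
  have hmS : Measurable (fun ω => fun i : S => x i ω) := measurable_pi_lambda _ fun i => hmeas i
  have : IsProbabilityMeasure (μ.map (fun ω => fun i : S => x i ω)) :=
    Measure.isProbabilityMeasure_map hmS.aemeasurable
  rw [← integral_map (φ := fun ω => ((fun i : S => x i ω), x c ω)) (f := Φ)
    (hmS.prodMk (hmeas c)).aemeasurable hΦ.aestronglyMeasurable,
    markov_compProd hmeas hM S b c hb hS hbc,
    Measure.integral_compProd (bdd_integrable _ hΦ C hC)]
  rw [integral_map hmS.aemeasurable]
  · rfl
  · exact (hΦ.stronglyMeasurable.integral_kernel_prod_right').aestronglyMeasurable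

lemma markov_future {Ω : Type*} [MeasurableSpace Ω] {μ : Measure Ω} [IsProbabilityMeasure μ]
    {x : ℝ → Ω → ℝ} (hmeas : ∀ t, Measurable (x t)) (hM : MarkovProp μ x) :
    ∀ (k : ℕ) (u : Fin (k + 1) → ℝ), StrictMono u → ∀ F : (Fin (k + 1) → ℝ) → ℂ,
      Measurable F → ∀ C : ℝ, (∀ y, ‖F y‖ ≤ C) →
      ∃ h : ℝ → ℂ, Measurable h ∧ (∀ y, ‖h y‖ ≤ C) ∧
        ∀ S : Finset ℝ, u 0 ∈ S → (∀ s ∈ S, s ≤ u 0) → ∀ G : (S → ℝ) → ℂ, Measurable G →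
          (∃ D, ∀ y, ‖G y‖ ≤ D) →
          ∫ ω, F (fun i => x (u i) ω) * G (fun i => x i ω) ∂μ
            = ∫ ω, h (x (u 0) ω) * G (fun i => x i ω) ∂μ := by
  intro k
  induction k with
  | zero =>
    intro u hu F hF C hC
    refine ⟨fun y => F (fun _ => y), by fun_prop, fun y => hC _, ?_⟩
    intro S _ _ G _ _
    congr 1
    ext ω
    congr 2
    ext i
    rw [Fin.eq_zero i]
  | succ k ih =>
    intro u hu F hF C hC
    set b := u (Fin.last k).castSucc with hbdef
    set c := u (Fin.last (k + 1)) with hcdef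
    have hbc : b < c := hu (Fin.castSucc_lt_last _)
    let κ := condDistrib (x c) (x b) μ
    have hsn : Measurable fun p : (Fin (k + 1) → ℝ) × ℝ =>
        (Fin.snoc (α := fun _ => ℝ) p.1 p.2 : Fin (k + 2) → ℝ) := by
      refine measurable_pi_lambda _ fun i => ?_
      induction i using Fin.lastCases with
      | last => simpa using measurable_snd
      | cast i => simpa using! (measurable_pi_apply i).comp measurable_fst
    let F' : (Fin (k + 1) → ℝ) → ℂ := fun v =>
      ∫ z, F (Fin.snoc (α := fun _ => ℝ) v z) ∂(κ (v (Fin.last k)))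
    have hF' : Measurable F' := by
      have := (hF.comp hsn).stronglyMeasurable.integral_kernel_prod_right'
        (κ := κ.comap (fun v : Fin (k + 1) → ℝ => v (Fin.last k)) (measurable_pi_apply _))
      exact this.measurable
    have hC' : ∀ v, ‖F' v‖ ≤ C := fun v => by
      have := norm_integral_le_of_norm_le_const (μ := κ (v (Fin.last k)))
        (f := fun z => F (Fin.snoc (α := fun _ => ℝ) v z)) (C := C)
        (Filter.Eventually.of_forall fun z => hC _)
      simpa using this
    obtain ⟨h, hh, hhC, H⟩ := ih (fun i => u i.castSucc)
      (hu.comp Fin.strictMono_castSucc) F' hF' C hC'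
    refine ⟨h, hh, hhC, ?_⟩
    intro S h0 hS G hG hD
    obtain ⟨D, hD⟩ := hD
    have := H S h0 hS G hG ⟨D, hD⟩
    refine Eq.trans ?_ this
    classical
    let S' : Finset ℝ := S ∪ Finset.univ.image (fun i : Fin (k + 1) => u i.castSucc)
    have hSS' : ∀ s ∈ S, s ∈ S' := fun s hs => Finset.mem_union_left _ hs
    have huS' : ∀ i : Fin (k + 1), u i.castSucc ∈ S' := fun i =>
      Finset.mem_union_right _ (Finset.mem_image_of_mem _ (Finset.mem_univ i))
    have hle : ∀ s ∈ S', s ≤ b := by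
      intro s hs
      rcases Finset.mem_union.1 hs with hs | hs
      · exact (hS s hs).trans (hu.monotone (Fin.zero_le _))
      · obtain ⟨i, -, rfl⟩ := Finset.mem_image.1 hs
        exact hu.monotone (Fin.castSucc_le_castSucc_iff.2 (Fin.le_last i))
    let Φ : (S' → ℝ) × ℝ → ℂ := fun p =>
      F (Fin.snoc (α := fun _ => ℝ) (fun i : Fin (k + 1) => p.1 ⟨u i.castSucc, huS' i⟩) p.2)
        * G (fun s => p.1 ⟨s, hSS' s s.2⟩)
    have hΦ : Measurable Φ := by
      refine Measurable.mul ?_ ?_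
      · refine hF.comp (hsn.comp (f := fun p : (S' → ℝ) × ℝ =>
          ((fun i : Fin (k + 1) => p.1 ⟨u i.castSucc, huS' i⟩), p.2)) ?_)
        fun_prop
      · exact hG.comp (by fun_prop)
    have hC0 : 0 ≤ C := (norm_nonneg _).trans (hC 0)
    have key := markov_integral hmeas hM S' b c (huS' _) hle hbc Φ hΦ (C * D) (fun p => by
      rw [norm_mul]
      exact mul_le_mul (hC _) (hD _) (norm_nonneg _) hC0)
    have e1 : ∀ ω, (Fin.snoc (α := fun _ => ℝ) (fun i : Fin (k + 1) => x (u i.castSucc) ω)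
        (x c ω) : Fin (k + 2) → ℝ) = fun i => x (u i) ω := by
      intro ω
      ext i
      induction i using Fin.lastCases with
      | last => simp [c]
      | cast i => simp
    simp only [Φ, e1, integral_mul_const] at key
    exact key

/-- A stationary symmetric Markov process is reflection positive about every time point:
if the finite-dimensional distributions of `x` are invariant under all time translations
and under time reflection, and `x` has the Markov property, then for every `a ∈ ℝ`,
all times `t₁,…,tₙ > a`, and every bounded measurable complex `F`,
`E[F(x(t₁),…,x(tₙ)) ⋅ conj (F(x(2a-t₁),…,x(2a-tₙ)))] ≥ 0`. -/
theorem stationary_symmetric_markov_reflection_positive_everywhere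
    {Ω : Type*} [MeasurableSpace Ω] (μ : Measure Ω) [IsProbabilityMeasure μ]
    (x : ℝ → Ω → ℝ) (hmeas : ∀ t, Measurable (x t))
    (hstat : ∀ (τ : ℝ) (n : ℕ) (t : Fin n → ℝ),
      Measure.map (fun ω => fun i => x (t i + τ) ω) μ
        = Measure.map (fun ω => fun i => x (t i) ω) μ)
    (hsym : ∀ (n : ℕ) (t : Fin n → ℝ),
      Measure.map (fun ω => fun i => x (t i) ω) μ
        = Measure.map (fun ω => fun i => x (-(t i)) ω) μ)
    (hMarkov : ∀ (n : ℕ) (t : Fin (n + 2) → ℝ), StrictMono t →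
      ∀ g : ℝ → ℝ, Measurable g → (∃ C, ∀ y, |g y| ≤ C) →
      μ[(fun ω => g (x (t (Fin.last (n + 1))) ω)) |
          MeasurableSpace.comap (fun ω => fun i : Fin (n + 1) => x (t i.castSucc) ω)
            MeasurableSpace.pi]
        =ᵐ[μ]
      μ[(fun ω => g (x (t (Fin.last (n + 1))) ω)) |
          MeasurableSpace.comap (x (t (Fin.last n).castSucc)) (borel ℝ)]) :
    ∀ (a : ℝ) (n : ℕ) (t : Fin n → ℝ), (∀ i, a < t i) → StrictMono t →
      ∀ F : (Fin n → ℝ) → ℂ, Measurable F → (∃ C, ∀ y, ‖F y‖ ≤ C) →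
      0 ≤ ∫ ω, F (fun i => x (t i) ω)
            * (starRingEnd ℂ) (F (fun i => x (2 * a - t i) ω)) ∂μ := by
  intro a n t hat hmono F hF ⟨C, hC⟩
  have hM : MarkovProp μ x := hMarkov
  let u : Fin (n + 1) → ℝ := Fin.cons (α := fun _ => ℝ) a t
  have hu0 : u 0 = a := rfl
  have hus : ∀ i : Fin n, u i.succ = t i := fun i => rfl
  have hu : StrictMono u := by
    intro i j hij
    induction j using Fin.cases with
    | zero => exact absurd hij (Fin.not_lt_zero i)
    | succ j =>
      induction i using Fin.cases with
      | zero => exact hat j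
      | succ i => exact hmono (Fin.succ_lt_succ_iff.1 hij)
  have hFt : Measurable fun v : Fin (n + 1) → ℝ => F (fun i => v i.succ) :=
    hF.comp (by fun_prop)
  obtain ⟨h, hh, hhC, H⟩ := markov_future hmeas hM n u hu (fun v => F (fun i => v i.succ)) hFt C
    (fun y => hC _)
  simp only [hu0, hus] at H
  classical
  -- first application: the past together with the time `a`
  let S : Finset ℝ := insert a (Finset.univ.image fun i : Fin n => 2 * a - t i)
  have hSmem : ∀ i : Fin n, 2 * a - t i ∈ S := fun i =>
    Finset.mem_insert_of_mem (Finset.mem_image_of_mem _ (Finset.mem_univ i))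
  have hSle : ∀ s ∈ S, s ≤ a := by
    intro s hs
    rcases Finset.mem_insert.1 hs with rfl | hs
    · exact le_rfl
    · obtain ⟨i, -, rfl⟩ := Finset.mem_image.1 hs
      have := hat i
      linarith
  have hconj : Measurable (starRingEnd ℂ) := Complex.continuous_conj.measurable
  have H1 := H S (Finset.mem_insert_self _ _) hSle
    (fun y => (starRingEnd ℂ) (F (fun i => y ⟨2 * a - t i, hSmem i⟩)))
    (hconj.comp (hF.comp (by fun_prop))) ⟨C, fun y => by
      rw [RCLike.norm_conj]; exact hC _⟩
  -- second application: only the time `a`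
  have H2 := H {a} (Finset.mem_singleton_self a) (fun s hs => (Finset.mem_singleton.1 hs).le)
    (fun y => (starRingEnd ℂ) (h (y ⟨a, Finset.mem_singleton_self a⟩)))
    (hconj.comp (hh.comp (by fun_prop))) ⟨C, fun y => by
      rw [RCLike.norm_conj]; exact hhC _⟩
  -- reflection about `a`
  let Ψ : (Fin (n + 1) → ℝ) → ℂ := fun v =>
    h (v 0) * (starRingEnd ℂ) (F (fun i => v i.succ))
  have hΨ : Measurable Ψ :=
    (hh.comp (measurable_pi_apply 0)).mul (hconj.comp hFt)
  have hmap : Measure.map (fun ω => fun i => x (u i) ω) μ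
      = Measure.map (fun ω => fun i => x (-(u i) + 2 * a) ω) μ :=
    (hsym (n + 1) u).trans (hstat (2 * a) (n + 1) fun i => -(u i)).symm
  have H3 : ∫ ω, Ψ (fun i => x (u i) ω) ∂μ = ∫ ω, Ψ (fun i => x (-(u i) + 2 * a) ω) ∂μ := by
    rw [← integral_map (φ := fun ω => fun i => x (u i) ω) (f := Ψ)
        (measurable_pi_lambda _ fun i => hmeas _).aemeasurable hΨ.aestronglyMeasurable,
      hmap, integral_map (measurable_pi_lambda _ fun i => hmeas _).aemeasurable
        hΨ.aestronglyMeasurable]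
  have ea : -a + 2 * a = a := by ring
  have et : ∀ i, -(t i) + 2 * a = 2 * a - t i := fun i => by ring
  simp only [Ψ, hu0, hus, ea, et] at H3
  rw [H1, ← H3]
  have H4 : ∫ ω, h (x a ω) * (starRingEnd ℂ) (F (fun i => x (t i) ω)) ∂μ
      = (starRingEnd ℂ) (∫ ω, F (fun i => x (t i) ω) * (starRingEnd ℂ) (h (x a ω)) ∂μ) := by
    rw [← integral_conj]
    congr 1
    ext ω
    rw [map_mul, Complex.conj_conj, mul_comm]
  rw [H4, H2, ← integral_conj]
  have H5 : ∀ ω, (starRingEnd ℂ) (h (x a ω) * (starRingEnd ℂ) (h (x a ω)))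
      = ((Complex.normSq (h (x a ω)) : ℝ) : ℂ) := by
    intro ω
    rw [Complex.mul_conj, Complex.conj_ofReal]
  simp only [H5]
  rw [integral_complex_ofReal]
  exact Complex.zero_le_real.2 (integral_nonneg fun ω => Complex.normSq_nonneg _)
end
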